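/- arXiv:2602.04205 — 7 statements merged into one kernel-verified Lean document; each statement's English description precedes it below -/
import Mathlib

section
/- Let G : ℝ → ℝ be a continuous, compactly supported function and define u(r,t) = (1/r) ∫_{t−r}^{t+r} G(s) ds for r > 0, t ∈ ℝ. Then lim_{t→−∞} ∫_0^∞ | r ∂_t u(r,t) − G(r+t) |² dr = 0 and lim_{t→+∞} ∫_0^∞ | r ∂_t u(r,t) + G(−(r−t)) |² dr = 0. In other words, the radiation profile of u in the positive time direction is G_+(s) = −G(−s). -/
open MeasureTheory

noncomputable section

/-- The radial free wave with radiation profile `G` in the negative time direction: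
`u(r,t) = (1/r) ∫_{t-r}^{t+r} G(s) ds`. -/
noncomputable def freeWave (G : ℝ → ℝ) (r t : ℝ) : ℝ :=
  (1 / r) * ∫ s in (t - r)..(t + r), G s

theorem freeWave_deriv (G : ℝ → ℝ) (hGc : Continuous G) (r t : ℝ) (hr : 0 < r) :
    r * deriv (fun τ => freeWave G r τ) t = G (t + r) - G (t - r) := by
  have hF : ∀ x, HasDerivAt (fun y => ∫ s in (0:ℝ)..y, G s) (G x) x := fun x =>
    (hGc.integral_hasStrictDerivAt 0 x).hasDerivAt
  have h1 : HasDerivAt (fun τ => ∫ s in (0:ℝ)..(τ + r), G s) (G (t + r)) t :=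
    (hF (t + r)).comp_add_const t r
  have h2 : HasDerivAt (fun τ => ∫ s in (0:ℝ)..(τ - r), G s) (G (t - r)) t :=
    (hF (t - r)).comp_sub_const t r
  have h3 : HasDerivAt (fun τ => freeWave G r τ) ((1 / r) * (G (t + r) - G (t - r))) t := by
    refine ((h1.sub h2).const_mul (1 / r)).congr_of_eventuallyEq (Filter.Eventually.of_forall ?_)
    intro τ
    simp only [freeWave, Pi.sub_apply]
    rw [intervalIntegral.integral_interval_sub_left (hGc.intervalIntegrable _ _)
      (hGc.intervalIntegrable _ _)]
  rw [h3.deriv]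
  field_simp

theorem zero_outside (G : ℝ → ℝ) (hGs : HasCompactSupport G) :
    ∃ R : ℝ, ∀ x, R < |x| → G x = 0 := by
  obtain ⟨R, hR⟩ := hGs.isCompact.isBounded.exists_norm_le
  refine ⟨R, fun x hx => image_eq_zero_of_notMem_tsupport fun h => ?_⟩
  have := hR x h
  rw [Real.norm_eq_abs] at this
  linarith

theorem stmt5 (G : ℝ → ℝ) (hGc : Continuous G) (hGs : HasCompactSupport G) :
    Filter.Tendsto
      (fun t => ∫ r in Set.Ioi (0:ℝ),
        (r * deriv (fun τ => freeWave G r τ) t - G (r + t)) ^ 2)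
      Filter.atBot (nhds 0) ∧
    Filter.Tendsto
      (fun t => ∫ r in Set.Ioi (0:ℝ),
        (r * deriv (fun τ => freeWave G r τ) t + G (-(r - t))) ^ 2)
      Filter.atTop (nhds 0) := by
  obtain ⟨R, hR⟩ := zero_outside G hGs
  constructor
  · refine tendsto_const_nhds.congr' ?_
    filter_upwards [Filter.eventually_lt_atBot (-R), Filter.eventually_lt_atBot 0] with t ht ht0
    symm
    refine setIntegral_eq_zero_of_forall_eq_zero fun r hr => ?_
    have hr : 0 < r := hr
    rw [freeWave_deriv G hGc r t hr, hR (t - r) (by rw [abs_of_neg] <;> linarith), add_comm r t]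
    ring
  · refine tendsto_const_nhds.congr' ?_
    filter_upwards [Filter.eventually_gt_atTop R, Filter.eventually_gt_atTop 0] with t ht ht0
    symm
    refine setIntegral_eq_zero_of_forall_eq_zero fun r hr => ?_
    have hr : 0 < r := hr
    rw [freeWave_deriv G hGc r t hr, hR (t + r) (by rw [abs_of_pos] <;> linarith), neg_sub]
    ring

end
end

section
/- Let G : ℝ → ℝ be continuous and compactly supported, and define u₀(r) = (1/r)∫_{−r}^{r} G(s) ds and u₁(r) = (G(r) − G(−r))/r for r > 0. Then for every R > 0: 4π ∫_R^∞ ( |u₀'(r)|² + |u₁(r)|² ) r² dr = 8π ∫_{{s : |s| > R}} |G(s)|² ds + 4π R |u₀(R)|². -/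
open MeasureTheory Real

noncomputable section

theorem stmt6 (G : ℝ → ℝ) (hGc : Continuous G) (hGs : HasCompactSupport G)
    (R : ℝ) (hR : 0 < R)
    (u0 u1 : ℝ → ℝ)
    (hu0 : ∀ r, u0 r = (1 / r) * ∫ s in (-r)..r, G s)
    (hu1 : ∀ r, u1 r = (G r - G (-r)) / r) :
    4 * π * ∫ r in Set.Ioi R, ((deriv u0 r) ^ 2 + (u1 r) ^ 2) * r ^ 2 =
      8 * π * (∫ s in {s : ℝ | R < |s|}, (G s) ^ 2) + 4 * π * R * (u0 R) ^ 2 := by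
  obtain ⟨F, hF⟩ : ∃ F : ℝ → ℝ, ∀ r, F r = ∫ s in (-r)..r, G s := ⟨_, fun _ => rfl⟩
  have hGi : Integrable G := hGc.integrable_of_hasCompactSupport hGs
  have hG2c : Continuous (fun s => (G s) ^ 2) := hGc.pow 2
  have hG2i : Integrable (fun s => (G s) ^ 2) := by
    refine hG2c.integrable_of_hasCompactSupport ?_
    exact hGs.comp_left (g := fun x : ℝ => x ^ 2) (by simp)
  have hG2n : Integrable (fun s => (G (-s)) ^ 2) := hG2i.comp_neg
  have hFd : ∀ r, HasDerivAt F (G r + G (-r)) r := by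
    intro r
    have e : F = fun r => (∫ s in (0:ℝ)..r, G s) - ∫ s in (0:ℝ)..(-r), G s := by
      funext x
      rw [hF, intervalIntegral.integral_interval_sub_left] <;> exact hGc.intervalIntegrable _ _
    rw [e]
    have h1 : ∀ x, HasDerivAt (fun r => ∫ s in (0:ℝ)..r, G s) (G x) x := fun x =>
      hGc.integral_hasStrictDerivAt 0 x |>.hasDerivAt
    have h2 := (h1 (-r)).comp r (hasDerivAt_neg r)
    have h3 := (h1 r).sub h2
    refine h3.congr_deriv ?_
    ring
  have hFb : ∀ r, |F r| ≤ ∫ s, |G s| := by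
    intro r
    rw [hF]
    rw [← Real.norm_eq_abs]
    refine (intervalIntegral.norm_integral_le_integral_norm_uIoc).trans ?_
    exact setIntegral_le_integral hGi.norm (Filter.Eventually.of_forall fun _ => norm_nonneg _)
  have hu0F : u0 = fun r => F r / r := by
    funext r; rw [hu0, hF]; ring
  have hder : ∀ r, 0 < r → deriv u0 r = ((G r + G (-r)) * r - F r) / r ^ 2 := by
    intro r hr
    rw [hu0F]
    have : HasDerivAt (fun r => F r / r) (((G r + G (-r)) * r - F r * 1) / r ^ 2) r :=
      (hFd r).div (hasDerivAt_id r) hr.ne'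
    simpa using this.deriv
  set K : ℝ → ℝ := fun s => (G s) ^ 2 + (G (-s)) ^ 2 with hK
  have hKc : Continuous K := by fun_prop
  have hKi : Integrable K := hG2i.add hG2n
  have hHd : ∀ r, 0 < r → HasDerivAt (fun r => 2 * (∫ s in R..r, K s) - F r ^ 2 / r)
      (((deriv u0 r) ^ 2 + (u1 r) ^ 2) * r ^ 2) r := by
    intro r hr
    have h1 : HasDerivAt (fun r => ∫ s in R..r, K s) (K r) r :=
      (hKc.integral_hasStrictDerivAt R r).hasDerivAt
    have h2 := (h1.const_mul 2).sub (((hFd r).pow 2).div (hasDerivAt_id r) hr.ne')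
    refine HasDerivAt.congr_deriv (f := fun r => 2 * (∫ s in R..r, K s) - F r ^ 2 / r) h2 ?_
    rw [hder r hr, hu1]
    simp only [hK, id]
    simp
    field_simp
    ring
  have hT0 : Filter.Tendsto (fun r => F r ^ 2 / r) Filter.atTop (nhds 0) := by
    have h1 : Filter.Tendsto (fun r : ℝ => (∫ s, |G s|) ^ 2 / r) Filter.atTop (nhds 0) :=
      tendsto_const_nhds.div_atTop Filter.tendsto_id
    refine squeeze_zero' ?_ ?_ h1
    · filter_upwards [Filter.eventually_gt_atTop 0] with r hr
      positivity
    · filter_upwards [Filter.eventually_gt_atTop 0] with r hr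
      have : F r ^ 2 ≤ (∫ s, |G s|) ^ 2 := by
        rw [← sq_abs (F r)]
        exact pow_le_pow_left₀ (abs_nonneg _) (hFb r) 2
      gcongr
  have hT1 := intervalIntegral_tendsto_integral_Ioi R hKi.integrableOn Filter.tendsto_id
  have hT := (hT1.const_mul 2).sub hT0
  have key := integral_Ioi_of_hasDerivAt_of_nonneg' (a := R)
    (fun x hx => hHd x (lt_of_lt_of_le hR hx)) (fun x _ => by positivity) hT
  rw [key]
  have hset : {s : ℝ | R < |s|} = Set.Ioi R ∪ Set.Iio (-R) := by
    ext s
    simp only [Set.mem_ofPred_eq, Set.mem_union, Set.mem_Ioi, Set.mem_Iio, lt_abs]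
    constructor <;> (rintro (h | h) <;> [left; right] <;> linarith)
  have hdisj : Disjoint (Set.Ioi R) (Set.Iio (-R)) := by
    rw [Set.disjoint_left]
    intro s h1 h2
    simp only [Set.mem_Ioi, Set.mem_Iio] at h1 h2
    linarith
  rw [hset, setIntegral_union hdisj measurableSet_Iio hG2i.integrableOn hG2i.integrableOn,
    ← integral_Iic_eq_integral_Iio]
  have hn := integral_comp_neg_Ioi R (fun s => (G s) ^ 2)
  rw [← hn, hK, integral_add hG2i.integrableOn hG2n.integrableOn, hu0F]
  simp
  field_simp
  ring

end
end

section
/- There exists an absolute constant C > 0 such that for all λ, λ' > 0 and every k ∈ {1,2,3,4}: ∫_ℝ ( ∫_{{x ∈ ℝ³ : |x| > |t|}} W_λ(x)^{2k} W_{λ'}(x)^{2(5−k)} dx )^{1/2} dt ≤ C · min{ (λ/λ')^{1/2}, (λ'/λ)^{1/2} }, i.e. ‖χ₀ W_λ^k W_{λ'}^{5−k}‖_{L¹L²(ℝ×ℝ³)} ≲ min{(λ/λ')^{1/2}, (λ'/λ)^{1/2}}. -/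
open MeasureTheory

noncomputable section

abbrev E3 : Type := EuclideanSpace ℝ (Fin 3)

/-- The rescaled ground state `W_λ(x) = λ^{-1/2} (1/3 + |x|²/λ²)^{-1/2}`. -/
noncomputable def groundState (lam : ℝ) (x : E3) : ℝ :=
  lam ^ (-(1/2) : ℝ) * (1/3 + ‖x‖ ^ 2 / lam ^ 2) ^ (-(1/2) : ℝ)

/-- The denominator `a²/3 + s²`. -/
def qq (a s : ℝ) : ℝ := a ^ 2 / 3 + s ^ 2

lemma qq_pos {a : ℝ} (ha : 0 < a) (s : ℝ) : 0 < qq a s := by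
  unfold qq; positivity

lemma qq_cont (a : ℝ) : Continuous (qq a) := by
  unfold qq; fun_prop

lemma groundState_sq {a : ℝ} (ha : 0 < a) (x : E3) :
    groundState a x ^ 2 = a / qq a ‖x‖ := by
  have h1 : 0 < 1 / 3 + ‖x‖ ^ 2 / a ^ 2 := by positivity
  have key : ∀ y : ℝ, 0 < y → (y ^ (-(1/2) : ℝ)) ^ 2 = y⁻¹ := by
    intro y hy
    rw [← Real.rpow_natCast, ← Real.rpow_mul hy.le, ← Real.rpow_neg_one]
    norm_num
  unfold groundState
  rw [mul_pow, key a ha, key _ h1]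
  unfold qq
  have h2 : 0 < a ^ 2 / 3 + ‖x‖ ^ 2 := by positivity
  field_simp

lemma dom_integrable {a : ℝ} (ha : 0 < a) :
    Integrable (fun s : ℝ => (3 / a ^ 2) * (1 + (s / a) ^ 2)⁻¹) :=
  (Integrable.comp_div integrable_inv_one_add_sq ha.ne').const_mul _

lemma qq_inv_le {a : ℝ} (ha : 0 < a) (s : ℝ) :
    (qq a s)⁻¹ ≤ (3 / a ^ 2) * (1 + (s / a) ^ 2)⁻¹ := by
  have h : (3 / a ^ 2) * (1 + (s / a) ^ 2)⁻¹ = ((a ^ 2 + s ^ 2) / 3)⁻¹ := by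
    field_simp
  rw [h]
  apply inv_anti₀ (by positivity)
  unfold qq
  nlinarith [sq_nonneg s]

lemma qq_inv_integrable {a : ℝ} (ha : 0 < a) : Integrable (fun s : ℝ => (qq a s)⁻¹) := by
  refine (dom_integrable ha).mono'
    ((qq_cont a).inv₀ (fun s => (qq_pos ha s).ne')).aestronglyMeasurable ?_
  refine Filter.Eventually.of_forall fun s => ?_
  rw [Real.norm_of_nonneg (inv_nonneg.2 (qq_pos ha s).le)]
  exact qq_inv_le ha s

lemma qq_inv_integral {a : ℝ} (ha : 0 < a) : ∫ s : ℝ, (qq a s)⁻¹ ≤ 3 * Real.pi / a := by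
  calc ∫ s : ℝ, (qq a s)⁻¹ ≤ ∫ s : ℝ, (3 / a ^ 2) * (1 + (s / a) ^ 2)⁻¹ :=
        integral_mono (qq_inv_integrable ha) (dom_integrable ha) (qq_inv_le ha)
    _ = 3 * Real.pi / a := by
        rw [integral_const_mul, Measure.integral_comp_div (fun s : ℝ => (1 + s ^ 2)⁻¹) a,
          integral_univ_inv_one_add_sq, abs_of_pos ha, smul_eq_mul]
        field_simp

/-- The radial majorant. -/
def hh (a b r : ℝ) : ℝ := a ^ 4 * (b / qq b r) * ((qq a r)⁻¹) ^ 2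

lemma hh_nonneg {a b : ℝ} (ha : 0 < a) (hb : 0 < b) (r : ℝ) : 0 ≤ hh a b r := by
  have := qq_pos ha r
  have := qq_pos hb r
  unfold hh; positivity

lemma hh_cont {a b : ℝ} (ha : 0 < a) (hb : 0 < b) : Continuous (hh a b) := by
  have h1 := (qq_cont a).inv₀ (fun s => (qq_pos ha s).ne')
  have h2 := (qq_cont b).inv₀ (fun s => (qq_pos hb s).ne')
  unfold hh
  simp only [div_eq_mul_inv]
  exact (continuous_const.mul (continuous_const.mul h2)).mul (h1.pow 2)

lemma hh_bound {a b : ℝ} (ha : 0 < a) (hb : 0 < b) (r : ℝ) :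
    r ^ 2 * hh a b r ≤ 3 * a ^ 3 * min (a / b) (b / a) * (qq a r)⁻¹ := by
  have hA := qq_pos ha r
  have hB := qq_pos hb r
  have hr : r ^ 2 ≤ qq a r := by unfold qq; nlinarith [sq_nonneg a]
  have hrb : r ^ 2 ≤ qq b r := by unfold qq; nlinarith [sq_nonneg b]
  have hab : a ^ 2 / 3 ≤ qq a r := by unfold qq; nlinarith [sq_nonneg r]
  have hbb : b ^ 2 / 3 ≤ qq b r := by unfold qq; nlinarith [sq_nonneg r]
  have e : hh a b r = a ^ 4 * b / (qq b r * qq a r ^ 2) := by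
    unfold hh; field_simp
  rw [e]
  rcases min_choice (a / b) (b / a) with h | h <;> rw [h]
  · have e2 : 3 * a ^ 3 * (a / b) * (qq a r)⁻¹
        = a ^ 4 * b * qq a r / ((b ^ 2 / 3) * qq a r ^ 2) := by field_simp
    rw [e2, ← mul_div_assoc]
    have : r ^ 2 * (a ^ 4 * b) ≤ a ^ 4 * b * qq a r := by
      rw [mul_comm]; gcongr
    gcongr
  · have e2 : 3 * a ^ 3 * (b / a) * (qq a r)⁻¹
        = a ^ 4 * b * qq b r / (qq b r * (a ^ 2 / 3 * qq a r)) := by field_simp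
    rw [e2, ← mul_div_assoc]
    have h3 : r ^ 2 * (a ^ 4 * b) ≤ a ^ 4 * b * qq b r := by
      rw [mul_comm]; gcongr
    have h4 : a ^ 2 / 3 * qq a r ≤ qq a r ^ 2 := by
      rw [sq (qq a r)]; gcongr
    gcongr

lemma hh_int_aux {a b : ℝ} (ha : 0 < a) (hb : 0 < b) :
    IntegrableOn (fun r : ℝ => r ^ 2 * hh a b r) (Set.Ioi 0) := by
  refine Integrable.integrableOn ?_
  refine ((qq_inv_integrable ha).const_mul (3 * a ^ 3 * min (a / b) (b / a))).mono'
    ((continuous_pow 2).mul (hh_cont ha hb)).aestronglyMeasurable ?_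
  refine Filter.Eventually.of_forall fun s => ?_
  rw [Real.norm_of_nonneg (mul_nonneg (sq_nonneg s) (hh_nonneg ha hb s))]
  exact hh_bound ha hb s

lemma hh_integrable {a b : ℝ} (ha : 0 < a) (hb : 0 < b) :
    Integrable (fun x : E3 => hh a b ‖x‖) := by
  rw [integrable_fun_norm_addHaar (volume : Measure E3) (f := hh a b)]
  simpa using hh_int_aux ha hb

/-- The absolute constant. -/
def KK : ℝ := 27 * Real.pi * (volume : Measure E3).real (Metric.ball 0 1)

lemma KK_nonneg : 0 ≤ KK := by
  unfold KK; have := Real.pi_pos; positivity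

lemma hh_integral {a b : ℝ} (ha : 0 < a) (hb : 0 < b) :
    ∫ x : E3, hh a b ‖x‖ ≤ KK * min (a / b) (b / a) * a ^ 2 := by
  rw [integral_fun_norm_addHaar (volume : Measure E3) (hh a b)]
  have hm : 0 ≤ min (a / b) (b / a) := by positivity
  have h1 : ∫ r in Set.Ioi (0:ℝ), r ^ 2 * hh a b r
      ≤ 3 * a ^ 3 * min (a / b) (b / a) * (3 * Real.pi / a) := by
    have hI := (qq_inv_integrable ha).const_mul (3 * a ^ 3 * min (a / b) (b / a))
    calc _ ≤ ∫ r in Set.Ioi (0:ℝ), 3 * a ^ 3 * min (a / b) (b / a) * (qq a r)⁻¹ :=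
          integral_mono (hh_int_aux ha hb) hI.integrableOn (hh_bound ha hb)
      _ ≤ ∫ r : ℝ, 3 * a ^ 3 * min (a / b) (b / a) * (qq a r)⁻¹ := by
          refine setIntegral_le_integral hI (Filter.Eventually.of_forall fun r => ?_)
          have := qq_pos ha r
          show 0 ≤ 3 * a ^ 3 * min (a / b) (b / a) * (qq a r)⁻¹
          positivity
      _ ≤ _ := by
          rw [integral_const_mul]
          exact mul_le_mul_of_nonneg_left (qq_inv_integral ha) (by positivity)
  have h2 : Module.finrank ℝ E3 = 3 := by simp
  rw [h2]
  simp only [nsmul_eq_mul, smul_eq_mul]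
  set I := ∫ r in Set.Ioi (0:ℝ), r ^ (3 - 1) * hh a b r with hI
  have h3 : I ≤ 3 * a ^ 3 * min (a / b) (b / a) * (3 * Real.pi / a) := h1
  calc _ ≤ ((3:ℕ):ℝ) * ((volume : Measure E3).real (Metric.ball 0 1) *
        (3 * a ^ 3 * min (a / b) (b / a) * (3 * Real.pi / a))) := by gcongr
    _ = _ := by
      unfold KK
      push_cast
      field_simp
      ring

lemma mix {u v : ℝ} (hu : 0 ≤ u) (hv : 0 ≤ v) (k : ℕ) (h1 : 1 ≤ k) (h4 : k ≤ 4) :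
    u ^ k * v ^ (5 - k) ≤ u ^ 4 * v + v ^ 4 * u := by
  have huv : 0 ≤ u * v := mul_nonneg hu hv
  have key : ∀ p : ℝ, p ≤ u ^ 3 + v ^ 3 → u * v * p ≤ u ^ 4 * v + v ^ 4 * u := by
    intro p hp
    nlinarith [mul_le_mul_of_nonneg_left hp huv]
  have h3u := pow_nonneg hu 3
  have h3v := pow_nonneg hv 3
  interval_cases k
  · have := key (v ^ 3) (by linarith)
    norm_num; linarith
  · have := key (u * v ^ 2) (by
      nlinarith [mul_nonneg (add_nonneg hu hv) (sq_nonneg (u - v)), mul_nonneg hu (sq_nonneg (u - v)), mul_nonneg hv (sq_nonneg (u - v)), mul_nonneg huv hu])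
    norm_num; linarith
  · have := key (u ^ 2 * v) (by
      nlinarith [mul_nonneg (add_nonneg hu hv) (sq_nonneg (u - v)), mul_nonneg hu (sq_nonneg (u - v)), mul_nonneg hv (sq_nonneg (u - v)), mul_nonneg huv hv])
    norm_num; linarith
  · have := key (u ^ 3) (by linarith)
    norm_num; linarith

lemma term_le {a b t r : ℝ} (ha : 0 < a) (hb : 0 < b) (h : |t| < r) :
    (a / qq a r) ^ 4 * (b / qq b r) ≤ ((qq a t)⁻¹) ^ 2 * hh a b r := by
  have hA := qq_pos ha r
  have hB := qq_pos hb r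
  have hT := qq_pos ha t
  have hle : qq a t ≤ qq a r := by
    unfold qq
    have : t ^ 2 ≤ r ^ 2 := sq_le_sq' (by linarith [neg_abs_le t]) (by linarith [le_abs_self t])
    linarith
  have hinv : (qq a r)⁻¹ ≤ (qq a t)⁻¹ := inv_anti₀ hT hle
  have e : (a / qq a r) ^ 4 * (b / qq b r) = ((qq a r)⁻¹) ^ 2 * hh a b r := by
    unfold hh; field_simp
  rw [e]
  have := hh_nonneg ha hb r
  gcongr

lemma inner_le {a b : ℝ} (ha : 0 < a) (hb : 0 < b) (k : ℕ) (h1 : 1 ≤ k) (h4 : k ≤ 4) (t : ℝ) :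
    (∫ x in {x : E3 | |t| < ‖x‖},
          (groundState a x) ^ (2 * k) * (groundState b x) ^ (2 * (5 - k)))
      ≤ KK * min (a / b) (b / a) * (a * (qq a t)⁻¹ + b * (qq b t)⁻¹) ^ 2 := by
  have hS : MeasurableSet {x : E3 | |t| < ‖x‖} :=
    (isOpen_lt continuous_const continuous_norm).measurableSet
  have hA := qq_pos ha t
  have hB := qq_pos hb t
  have i1 := (hh_integrable ha hb).const_mul (((qq a t)⁻¹) ^ 2)
  have i2 := (hh_integrable hb ha).const_mul (((qq b t)⁻¹) ^ 2)
  have hm : 0 ≤ min (a / b) (b / a) := by positivity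
  calc _ ≤ ∫ x in {x : E3 | |t| < ‖x‖},
        (((qq a t)⁻¹) ^ 2 * hh a b ‖x‖ + ((qq b t)⁻¹) ^ 2 * hh b a ‖x‖) := by
        refine integral_mono_of_nonneg (Filter.Eventually.of_forall fun x => ?_)
          (i1.add i2).integrableOn ?_
        · show 0 ≤ (groundState a x) ^ (2 * k) * (groundState b x) ^ (2 * (5 - k))
          rw [pow_mul, pow_mul]; positivity
        · refine (ae_restrict_iff' hS).2 (Filter.Eventually.of_forall fun x hx => ?_)
          show (groundState a x) ^ (2 * k) * (groundState b x) ^ (2 * (5 - k)) ≤ _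
          rw [pow_mul, pow_mul, groundState_sq ha, groundState_sq hb]
          have p1 := qq_pos ha ‖x‖
          have p2 := qq_pos hb ‖x‖
          refine (mix (by positivity) (by positivity) k h1 h4).trans ?_
          exact add_le_add (term_le ha hb hx) (term_le hb ha hx)
    _ ≤ ∫ x : E3, (((qq a t)⁻¹) ^ 2 * hh a b ‖x‖ + ((qq b t)⁻¹) ^ 2 * hh b a ‖x‖) := by
        refine setIntegral_le_integral (i1.add i2) (Filter.Eventually.of_forall fun x => ?_)
        have := hh_nonneg ha hb ‖x‖
        have := hh_nonneg hb ha ‖x‖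
        show 0 ≤ ((qq a t)⁻¹) ^ 2 * hh a b ‖x‖ + ((qq b t)⁻¹) ^ 2 * hh b a ‖x‖
        positivity
    _ ≤ ((qq a t)⁻¹) ^ 2 * (KK * min (a / b) (b / a) * a ^ 2)
        + ((qq b t)⁻¹) ^ 2 * (KK * min (b / a) (a / b) * b ^ 2) := by
        rw [integral_add i1 i2, integral_const_mul, integral_const_mul]
        have := hh_integral ha hb
        have := hh_integral hb ha
        gcongr
    _ ≤ _ := by
        rw [min_comm (b / a)]
        have : 0 ≤ KK * min (a / b) (b / a) * (2 * (a * (qq a t)⁻¹) * (b * (qq b t)⁻¹)) := by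
          have := KK_nonneg
          positivity
        nlinarith [this]

theorem stmt7 :
    ∃ C > (0:ℝ), ∀ (lam lam' : ℝ), 0 < lam → 0 < lam' → ∀ k : ℕ, 1 ≤ k → k ≤ 4 →
      (∫ t : ℝ, (∫ x in {x : E3 | |t| < ‖x‖},
          (groundState lam x) ^ (2 * k) * (groundState lam' x) ^ (2 * (5 - k))) ^ ((1:ℝ)/2))
        ≤ C * min (Real.sqrt (lam / lam')) (Real.sqrt (lam' / lam)) := by
  refine ⟨6 * Real.pi * Real.sqrt KK + 1, by have := Real.pi_pos; positivity, ?_⟩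
  intro a b ha hb k h1 h4
  have hm : 0 ≤ min (a / b) (b / a) := by positivity
  have hmin : min (Real.sqrt (a / b)) (Real.sqrt (b / a)) = Real.sqrt (min (a / b) (b / a)) :=
    (Real.sqrt_monotone.map_min).symm
  rw [hmin]
  set m := min (a / b) (b / a) with hmdef
  have hI : Integrable (fun t : ℝ => Real.sqrt (KK * m) * (a * (qq a t)⁻¹ + b * (qq b t)⁻¹)) :=
    (((qq_inv_integrable ha).const_mul a).add ((qq_inv_integrable hb).const_mul b)).const_mul _
  have hJ : ∀ c : ℝ, 0 < c → c * ∫ t : ℝ, (qq c t)⁻¹ ≤ 3 * Real.pi := by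
    intro c hc
    calc c * ∫ t : ℝ, (qq c t)⁻¹ ≤ c * (3 * Real.pi / c) :=
          mul_le_mul_of_nonneg_left (qq_inv_integral hc) hc.le
      _ = _ := by field_simp
  calc _ ≤ ∫ t : ℝ, Real.sqrt (KK * m) * (a * (qq a t)⁻¹ + b * (qq b t)⁻¹) := by
        refine integral_mono_of_nonneg (Filter.Eventually.of_forall fun t => ?_) hI
          (Filter.Eventually.of_forall fun t => ?_)
        · refine Real.rpow_nonneg (integral_nonneg fun x => ?_) _
          show 0 ≤ (groundState a x) ^ (2 * k) * (groundState b x) ^ (2 * (5 - k))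
          rw [pow_mul, pow_mul]; positivity
        · have hA := qq_pos ha t
          have hB := qq_pos hb t
          show (_ : ℝ) ^ ((1:ℝ)/2) ≤ _
          rw [← Real.sqrt_eq_rpow]
          refine (Real.sqrt_le_sqrt (inner_le ha hb k h1 h4 t)).trans ?_
          rw [Real.sqrt_mul (mul_nonneg KK_nonneg hm), Real.sqrt_sq (by positivity)]
    _ = Real.sqrt (KK * m) * (a * (∫ t : ℝ, (qq a t)⁻¹) + b * ∫ t : ℝ, (qq b t)⁻¹) := by
        rw [integral_const_mul, integral_add ((qq_inv_integrable ha).const_mul a)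
          ((qq_inv_integrable hb).const_mul b), integral_const_mul, integral_const_mul]
    _ ≤ Real.sqrt (KK * m) * (3 * Real.pi + 3 * Real.pi) :=
        mul_le_mul_of_nonneg_left (add_le_add (hJ a ha) (hJ b hb)) (Real.sqrt_nonneg _)
    _ ≤ _ := by
        rw [Real.sqrt_mul KK_nonneg]
        nlinarith [Real.sqrt_nonneg m]

end
end

section
/- There exists an absolute constant C > 0 with the following property. Let G : ℝ → ℝ be locally integrable with M := sup_{r>0} (1/r) ∫_{−r}^{r} |G(s)| ds < ∞, and let v(x,t) = (1/|x|) ∫_{t−|x|}^{t+|x|} G(s) ds for x ≠ 0. Then for every λ > 0: ∫_ℝ ( ∫_{{x : |x| > |t|}} W_λ(x)^{8} |v(x,t)|² dx )^{1/2} dt ≤ C λ^{1/2} M, i.e. ‖χ₀ W_λ⁴ v‖_{L¹L²} ≲ λ^{1/2} sup_{r>0} (1/r)∫_{−r}^{r}|G(s)| ds. -/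
open MeasureTheory

noncomputable section

lemma rpow_neg_half_pow8 {a : ℝ} (ha : 0 < a) : (a ^ (-(1/2) : ℝ)) ^ 8 = (a ^ 4)⁻¹ := by
  rw [← Real.rpow_natCast, ← Real.rpow_mul ha.le, ← Real.rpow_natCast a 4, ← Real.rpow_neg ha.le]
  norm_num

lemma gs_bound {lam t : ℝ} (hl : 0 < lam) {x : E3} (hx : |t| < ‖x‖) :
    (groundState lam x) ^ 8 ≤
      (lam ^ 4)⁻¹ * (81 * ((1 + (lam⁻¹ * t) ^ 2)⁻¹) ^ 2 * ((1 + ‖lam⁻¹ • x‖ ^ 2)⁻¹) ^ 2) := by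
  unfold groundState
  have ha : 0 < 1/3 + ‖x‖ ^ 2 / lam ^ 2 := by positivity
  rw [mul_pow, rpow_neg_half_pow8 hl, rpow_neg_half_pow8 ha]
  refine mul_le_mul_of_nonneg_left ?_ (by positivity)
  have hn : ‖lam⁻¹ • x‖ ^ 2 = ‖x‖ ^ 2 / lam ^ 2 := by
    rw [norm_smul, norm_inv, Real.norm_eq_abs, abs_of_pos hl]; field_simp
  have ht : (lam⁻¹ * t) ^ 2 = t ^ 2 / lam ^ 2 := by field_simp
  have h2 : t ^ 2 / lam ^ 2 ≤ ‖x‖ ^ 2 / lam ^ 2 := by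
    have : t ^ 2 ≤ ‖x‖ ^ 2 := by
      rw [← sq_abs t]; exact pow_le_pow_left₀ (abs_nonneg t) hx.le 2
    gcongr
  rw [hn, ht]
  have h3 : 0 ≤ t ^ 2 / lam ^ 2 := by positivity
  generalize t ^ 2 / lam ^ 2 = b at *
  generalize ‖x‖ ^ 2 / lam ^ 2 = a at *
  have e : 81 * ((1 + b)⁻¹) ^ 2 * ((1 + a)⁻¹) ^ 2 = (((1 + b)/3) ^ 2 * ((1 + a)/3) ^ 2)⁻¹ := by
    have : 0 < 1 + a := by linarith
    field_simp; norm_num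
  rw [e]
  have h4 : (1 + b) / 3 ≤ 1/3 + a := by linarith
  have h5 : (1 + a) / 3 ≤ 1/3 + a := by linarith
  have h6 : 0 < (1 + b) / 3 := by linarith
  have h7 : 0 < (1 + a) / 3 := by linarith
  apply inv_anti₀ (by positivity)
  calc ((1 + b)/3) ^ 2 * ((1 + a)/3) ^ 2 ≤ (1/3 + a) ^ 2 * (1/3 + a) ^ 2 := by gcongr
    _ = _ := by ring

lemma v_bound {G : ℝ → ℝ} (hG : LocallyIntegrable G volume) {M : ℝ}
    (hM : ∀ r > (0:ℝ), (1 / r) * ∫ s in (-r)..r, |G s| ≤ M) {t r : ℝ} (h : |t| < r) :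
    ((1 / r) * ∫ s in (t - r)..(t + r), G s) ^ 2 ≤ 4 * M ^ 2 := by
  have hr : 0 < r := (abs_nonneg t).trans_lt h
  obtain ⟨h1, h2⟩ := abs_lt.1 h
  have hi : ∀ a b, IntervalIntegrable (fun s => |G s|) volume a b := fun a b =>
    ((hG.integrableOn_isCompact isCompact_uIcc).intervalIntegrable).abs
  have a1 : |∫ s in (t - r)..(t + r), G s| ≤ ∫ s in (t - r)..(t + r), |G s| :=
    intervalIntegral.abs_integral_le_integral_abs (by linarith)
  have a2 : ∫ s in (t - r)..(t + r), |G s| ≤ ∫ s in (-(2*r))..(2*r), |G s| :=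
    intervalIntegral.integral_mono_interval (by linarith) (by linarith) (by linarith)
      (Filter.Eventually.of_forall fun s => abs_nonneg _) (hi _ _)
  have a3 := hM (2*r) (by linarith)
  have a4 : |(1 / r) * ∫ s in (t - r)..(t + r), G s| ≤ 2 * M := by
    rw [abs_mul, abs_of_pos (by positivity : 0 < 1 / r)]
    calc _ ≤ (1 / r) * ∫ s in (-(2*r))..(2*r), |G s| := by gcongr; exact a1.trans a2
      _ = 2 * ((1 / (2 * r)) * ∫ s in (-(2*r))..(2*r), |G s|) := by field_simp
      _ ≤ _ := by linarith
  rw [← sq_abs]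
  calc _ ≤ (2 * M) ^ 2 := pow_le_pow_left₀ (abs_nonneg _) a4 2
    _ = _ := by ring

lemma int3 : Integrable (fun x : E3 => ((1 + ‖x‖ ^ 2)⁻¹) ^ 2) volume := by
  have := integrable_rpow_neg_one_add_norm_sq (E := E3) (μ := volume) (r := 4) (by simp; norm_num)
  refine this.congr (Filter.Eventually.of_forall fun x => ?_)
  have h : 0 < 1 + ‖x‖ ^ 2 := by positivity
  show (1 + ‖x‖ ^ 2) ^ (-4 / 2 : ℝ) = _
  rw [show (-4 / 2 : ℝ) = -((2:ℕ):ℝ) by norm_num, Real.rpow_neg h.le, Real.rpow_natCast]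
  exact (inv_pow _ _).symm

theorem stmt8 :
    ∃ C > (0:ℝ), ∀ (G : ℝ → ℝ), LocallyIntegrable G volume →
      ∀ M : ℝ, (∀ r > (0:ℝ), (1 / r) * ∫ s in (-r)..r, |G s| ≤ M) →
      ∀ lam > (0:ℝ),
        (∫ t : ℝ, (∫ x in {x : E3 | |t| < ‖x‖},
            (groundState lam x) ^ 8 *
              ((1 / ‖x‖) * ∫ s in (t - ‖x‖)..(t + ‖x‖), G s) ^ 2) ^ ((1:ℝ)/2))
          ≤ C * Real.sqrt lam * M := by
  set K : ℝ := ∫ x : E3, ((1 + ‖x‖ ^ 2)⁻¹) ^ 2 with hK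
  have hK0 : 0 ≤ K := integral_nonneg fun x => by positivity
  refine ⟨18 * Real.sqrt K * Real.pi + 1, by positivity, ?_⟩
  intro G hG M hM lam hl
  have hM0 : 0 ≤ M := by
    refine le_trans ?_ (hM 1 one_pos)
    have : 0 ≤ ∫ s in (-1:ℝ)..1, |G s| :=
      intervalIntegral.integral_nonneg (by norm_num) fun s _ => abs_nonneg _
    linarith
  have hsc : Integrable (fun x : E3 => ((1 + ‖lam⁻¹ • x‖ ^ 2)⁻¹) ^ 2) volume :=
    int3.comp_smul (inv_ne_zero hl.ne')
  have hscI : ∫ x : E3, ((1 + ‖lam⁻¹ • x‖ ^ 2)⁻¹) ^ 2 = lam ^ 3 * K := by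
    have := Measure.integral_comp_inv_smul (volume : Measure E3)
      (fun x : E3 => ((1 + ‖x‖ ^ 2)⁻¹) ^ 2) lam
    rw [this, smul_eq_mul]
    simp [abs_of_pos hl, hK]
  have inner : ∀ t : ℝ, (∫ x in {x : E3 | |t| < ‖x‖},
            (groundState lam x) ^ 8 *
              ((1 / ‖x‖) * ∫ s in (t - ‖x‖)..(t + ‖x‖), G s) ^ 2) ≤
      (18 * Real.sqrt K * M * (Real.sqrt lam)⁻¹ * (1 + (lam⁻¹ * t) ^ 2)⁻¹) ^ 2 := by
    intro t
    set c : ℝ := (lam ^ 4)⁻¹ * (81 * ((1 + (lam⁻¹ * t) ^ 2)⁻¹) ^ 2) * (4 * M ^ 2) with hc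
    have hc0 : 0 ≤ c := by positivity
    have hms : MeasurableSet {x : E3 | |t| < ‖x‖} :=
      measurableSet_lt measurable_const measurable_norm
    calc _ ≤ ∫ x in {x : E3 | |t| < ‖x‖}, c * ((1 + ‖lam⁻¹ • x‖ ^ 2)⁻¹) ^ 2 := by
          apply integral_mono_of_nonneg
          · exact Filter.Eventually.of_forall fun x => by
              simp only [Pi.zero_apply]; positivity
          · exact (hsc.const_mul c).integrableOn
          · filter_upwards [ae_restrict_mem hms] with x hx
            have := mul_le_mul (gs_bound hl hx) (v_bound hG hM hx) (by positivity) (by positivity)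
            refine this.trans (le_of_eq ?_)
            rw [hc]; ring
      _ ≤ ∫ x : E3, c * ((1 + ‖lam⁻¹ • x‖ ^ 2)⁻¹) ^ 2 :=
          setIntegral_le_integral (hsc.const_mul c)
            (Filter.Eventually.of_forall fun x => by simp only [Pi.zero_apply]; positivity)
      _ = c * (lam ^ 3 * K) := by rw [integral_const_mul, hscI]
      _ = _ := by
          rw [hc]
          generalize (1 + (lam⁻¹ * t) ^ 2)⁻¹ = q
          rw [mul_pow, mul_pow, mul_pow, mul_pow, inv_pow (Real.sqrt lam), Real.sq_sqrt hK0,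
            Real.sq_sqrt hl.le]
          field_simp
          ring
  have hint : Integrable (fun t : ℝ => (1 + (lam⁻¹ * t) ^ 2)⁻¹) volume :=
    integrable_inv_one_add_sq.comp_mul_left' (inv_ne_zero hl.ne')
  have hintI : ∫ t : ℝ, (1 + (lam⁻¹ * t) ^ 2)⁻¹ = lam * Real.pi := by
    have := Measure.integral_comp_mul_left (fun t : ℝ => (1 + t ^ 2)⁻¹) lam⁻¹
    rw [this, integral_univ_inv_one_add_sq]
    simp [abs_of_pos hl]
  calc _ ≤ ∫ t : ℝ, (18 * Real.sqrt K * M * (Real.sqrt lam)⁻¹) * (1 + (lam⁻¹ * t) ^ 2)⁻¹ := by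
        apply integral_mono_of_nonneg
        · exact Filter.Eventually.of_forall fun t =>
            Real.rpow_nonneg (integral_nonneg fun x => by simp only [Pi.zero_apply]; positivity) _
        · exact hint.const_mul _
        · refine Filter.Eventually.of_forall fun t => ?_
          simp only []
          rw [← Real.sqrt_eq_rpow]
          exact Real.sqrt_le_iff.2 ⟨by positivity, inner t⟩
    _ = 18 * Real.sqrt K * Real.pi * Real.sqrt lam * M := by
        rw [integral_const_mul, hintI]
        have : lam = Real.sqrt lam * Real.sqrt lam := (Real.mul_self_sqrt hl.le).symm
        have hs : Real.sqrt lam ≠ 0 := (Real.sqrt_pos.2 hl).ne'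
        field_simp
        rw [Real.sq_sqrt hl.le]
    _ ≤ _ := by
        have : 0 ≤ Real.sqrt lam * M := by positivity
        nlinarith

end
end

section
/- There exists an absolute constant C > 0 such that for all λ, λ' > 0 with λ' ≤ λ and every ℓ ∈ {1,2,3,4,5}: ∫_{ℝ³} W_λ(x)^{ℓ} W_{λ'}(x)^{6−ℓ} dx ≤ C (λ'/λ)^{1/2}. -/
open MeasureTheory

noncomputable section

/-- Radial profile. -/
noncomputable def prof (r : ℝ) : ℝ := (√(1/3 + r ^ 2))⁻¹

lemma prof_pos (r : ℝ) : 0 < prof r := by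
  unfold prof; positivity

lemma prof_sq (r : ℝ) : prof r ^ 2 = (1/3 + r ^ 2)⁻¹ := by
  unfold prof
  rw [inv_pow, Real.sq_sqrt (by positivity)]

lemma prof_le_two (r : ℝ) : prof r ≤ 2 := by
  have h := prof_sq r
  have h2 : (1/3 + r ^ 2)⁻¹ ≤ (1/3 : ℝ)⁻¹ := by
    apply inv_anti₀ (by norm_num); nlinarith [sq_nonneg r]
  have h3 := prof_pos r
  norm_num at h2
  nlinarith

lemma prof_le_inv (r : ℝ) (hr : 0 < r) : prof r ≤ r⁻¹ := by
  unfold prof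
  apply inv_anti₀ hr
  apply Real.le_sqrt_of_sq_le
  linarith

lemma groundState_eq (s : ℝ) (hs : 0 < s) (x : E3) :
    groundState (s ^ 2) x = s⁻¹ * prof (‖(s ^ 2)⁻¹ • x‖) := by
  unfold groundState prof
  rw [norm_smul, Real.norm_of_nonneg (by positivity)]
  rw [Real.rpow_neg (by positivity), Real.rpow_neg (by positivity), ← Real.sqrt_eq_rpow,
    ← Real.sqrt_eq_rpow, Real.sqrt_sq hs.le]
  congr 4
  rw [mul_pow, inv_pow, div_eq_inv_mul]

/-- Dominating profile. -/
noncomputable def dom (r : ℝ) : ℝ := prof r ^ 5 * (1 + r⁻¹)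

lemma prof_continuous : Continuous prof := by
  unfold prof
  apply Continuous.inv₀ (by fun_prop)
  intro r; positivity

lemma dom_meas : Measurable dom := by
  unfold dom
  exact (prof_continuous.measurable.pow_const 5).mul (measurable_const.add measurable_inv)

lemma dom_nonneg (r : ℝ) (hr : 0 ≤ r) : 0 ≤ dom r := by
  unfold dom
  have := prof_pos r
  positivity

lemma dom_bound (r : ℝ) (hr : 0 < r) : r ^ 2 * dom r ≤ 12 * (1 + r ^ 2)⁻¹ := by
  have h0 := prof_pos r
  have h1 : r ^ 2 * dom r = (r ^ 2 + r) * prof r ^ 2 * prof r * prof r ^ 2 := by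
    unfold dom; field_simp
  have h2 : (r ^ 2 + r) * prof r ^ 2 ≤ 2 := by
    rw [prof_sq, ← div_eq_mul_inv, div_le_iff₀ (by positivity)]
    nlinarith [sq_nonneg (r - 1/2)]
  have h3 : prof r ^ 2 ≤ 3 * (1 + r ^ 2)⁻¹ := by
    rw [prof_sq, ← div_eq_mul_inv, inv_eq_one_div, div_le_div_iff₀ (by positivity) (by positivity)]
    nlinarith [sq_nonneg r]
  have h4 := prof_le_two r
  rw [h1]
  calc (r ^ 2 + r) * prof r ^ 2 * prof r * prof r ^ 2
      ≤ 2 * 2 * (3 * (1 + r ^ 2)⁻¹) := by gcongr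
    _ = _ := by ring

lemma dom_integrable_s10 : Integrable (fun x : E3 => dom ‖x‖) := by
  rw [integrable_fun_norm_addHaar (volume : Measure E3)]
  simp only [finrank_euclideanSpace, Fintype.card_fin, smul_eq_mul]
  refine Integrable.mono' ((integrable_inv_one_add_sq.const_mul 12).integrableOn) ?_ ?_
  · exact ((measurable_id.pow_const 2).mul dom_meas).aestronglyMeasurable
  · filter_upwards [ae_restrict_mem measurableSet_Ioi] with r hr
    have hr : 0 < r := hr
    have := dom_nonneg r hr.le
    rw [Real.norm_of_nonneg (by positivity)]
    exact dom_bound r hr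

lemma young (a b : ℝ) (ha : 0 < a) (hb : 0 < b) (l : ℕ) (h1 : 1 ≤ l) (h5 : l ≤ 5) :
    a ^ l * b ^ (6 - l) ≤ a * b ^ 5 + a ^ 5 * b := by
  obtain ⟨k, rfl⟩ := Nat.exists_eq_add_of_le' h1
  have hk : k ≤ 4 := by omega
  have e : a ^ (k + 1) * b ^ (6 - (k + 1)) = (a * b) * (a ^ k * b ^ (4 - k)) := by
    have : 6 - (k + 1) = (4 - k) + 1 := by omega
    rw [this]; ring
  have key : a ^ k * b ^ (4 - k) ≤ a ^ 4 + b ^ 4 := by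
    rcases le_total a b with h | h
    · calc a ^ k * b ^ (4 - k) ≤ b ^ k * b ^ (4 - k) := by gcongr
        _ = b ^ 4 := by rw [← pow_add]; congr 1; omega
        _ ≤ _ := by have : 0 < a ^ 4 := by positivity
                    linarith
    · calc a ^ k * b ^ (4 - k) ≤ a ^ k * a ^ (4 - k) := by gcongr
        _ = a ^ 4 := by rw [← pow_add]; congr 1; omega
        _ ≤ _ := by have : 0 < b ^ 4 := by positivity
                    linarith
  rw [e]
  calc (a * b) * (a ^ k * b ^ (4 - k)) ≤ (a * b) * (a ^ 4 + b ^ 4) := by gcongr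
    _ = _ := by ring

lemma scaled (s : ℝ) (hs : 0 < s) :
    Integrable (fun x : E3 => dom ‖(s ^ 2)⁻¹ • x‖) ∧
    ∫ x : E3, dom ‖(s ^ 2)⁻¹ • x‖ = s ^ 6 * ∫ x : E3, dom ‖x‖ := by
  constructor
  · exact dom_integrable_s10.comp_smul (by positivity)
  · have := Measure.integral_comp_inv_smul (volume : Measure E3) (fun x : E3 => dom ‖x‖) (s ^ 2)
    rw [this]
    simp only [finrank_euclideanSpace, Fintype.card_fin, smul_eq_mul]
    rw [abs_of_nonneg (by positivity)]
    ring

lemma pointwise (s m : ℝ) (hs : 0 < s) (hm : 0 < m) (l : ℕ) (h1 : 1 ≤ l) (h5 : l ≤ 5)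
    (x : E3) (hx : x ≠ 0) :
    groundState (s ^ 2) x ^ l * groundState (m ^ 2) x ^ (6 - l) ≤
      2 * s⁻¹ * (m⁻¹) ^ 5 * dom ‖(m ^ 2)⁻¹ • x‖ + m * (s⁻¹) ^ 7 * dom ‖(s ^ 2)⁻¹ • x‖ := by
  rw [groundState_eq s hs, groundState_eq m hm]
  have hn : 0 < ‖x‖ := norm_pos_iff.mpr hx
  have e1 : ‖(s ^ 2)⁻¹ • x‖ = (s ^ 2)⁻¹ * ‖x‖ := by
    rw [norm_smul, Real.norm_of_nonneg (by positivity)]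
  have e2 : ‖(m ^ 2)⁻¹ • x‖ = (m ^ 2)⁻¹ * ‖x‖ := by
    rw [norm_smul, Real.norm_of_nonneg (by positivity)]
  rw [e1, e2]
  set p := (s ^ 2)⁻¹ * ‖x‖ with hp
  set q := (m ^ 2)⁻¹ * ‖x‖ with hq
  have hp0 : 0 < p := by positivity
  have hq0 : 0 < q := by positivity
  have hpp := prof_pos p
  have hqq := prof_pos q
  refine (young _ _ (by positivity) (by positivity) l h1 h5).trans ?_
  apply add_le_add
  · have a1 := prof_le_two p
    have a2 : prof q ^ 5 ≤ dom q := by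
      unfold dom
      apply le_mul_of_one_le_right (by positivity)
      have : 0 < q⁻¹ := by positivity
      linarith
    calc s⁻¹ * prof p * (m⁻¹ * prof q) ^ 5 = prof p * s⁻¹ * m⁻¹ ^ 5 * prof q ^ 5 := by ring
      _ ≤ _ := by gcongr
  · have a1 := prof_le_inv q hq0
    have a2 : prof p ^ 5 * p⁻¹ ≤ dom p := by
      unfold dom
      gcongr
      linarith
    calc (s⁻¹ * prof p) ^ 5 * (m⁻¹ * prof q) = s⁻¹ ^ 5 * prof p ^ 5 * m⁻¹ * prof q := by ring
      _ ≤ s⁻¹ ^ 5 * prof p ^ 5 * m⁻¹ * q⁻¹ := by gcongr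
      _ = m * s⁻¹ ^ 7 * (prof p ^ 5 * p⁻¹) := by
          rw [hp, hq]; field_simp
      _ ≤ _ := by gcongr

theorem stmt10 :
    ∃ C > (0:ℝ), ∀ (lam lam' : ℝ), 0 < lam → 0 < lam' → lam' ≤ lam →
      ∀ l : ℕ, 1 ≤ l → l ≤ 5 →
        (∫ x : E3, (groundState lam x) ^ l * (groundState lam' x) ^ (6 - l))
          ≤ C * Real.sqrt (lam' / lam) := by
  have hK : 0 ≤ ∫ x : E3, dom ‖x‖ := integral_nonneg fun x => dom_nonneg _ (norm_nonneg _)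
  refine ⟨3 * (∫ x : E3, dom ‖x‖) + 1, by linarith, ?_⟩
  intro lam lam' h h' _ l h1 h5
  obtain ⟨s, hs, rfl⟩ : ∃ s : ℝ, 0 < s ∧ lam = s ^ 2 :=
    ⟨√lam, Real.sqrt_pos.mpr h, (Real.sq_sqrt h.le).symm⟩
  obtain ⟨m, hm, rfl⟩ : ∃ m : ℝ, 0 < m ∧ lam' = m ^ 2 :=
    ⟨√lam', Real.sqrt_pos.mpr h', (Real.sq_sqrt h'.le).symm⟩
  have hsq : √(m ^ 2 / s ^ 2) = m / s := by
    rw [← div_pow, Real.sqrt_sq (by positivity)]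
  rw [hsq]
  obtain ⟨is, es⟩ := scaled s hs
  obtain ⟨im, em⟩ := scaled m hm
  have hmono : (∫ x : E3, (groundState (s ^ 2) x) ^ l * (groundState (m ^ 2) x) ^ (6 - l)) ≤
      ∫ x : E3, (2 * s⁻¹ * (m⁻¹) ^ 5 * dom ‖(m ^ 2)⁻¹ • x‖
        + m * (s⁻¹) ^ 7 * dom ‖(s ^ 2)⁻¹ • x‖) := by
    apply integral_mono_of_nonneg
    · refine Filter.Eventually.of_forall fun x => ?_
      have := prof_pos ‖(s ^ 2)⁻¹ • x‖
      have := prof_pos ‖(m ^ 2)⁻¹ • x‖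
      simp only [groundState_eq s hs, groundState_eq m hm, Pi.zero_apply]
      positivity
    · exact (im.const_mul _).add (is.const_mul _)
    · filter_upwards [Measure.ae_ne (volume : Measure E3) 0] with x hx
      exact pointwise s m hs hm l h1 h5 x hx
  refine hmono.trans ?_
  rw [integral_add (im.const_mul _) (is.const_mul _), integral_const_mul, integral_const_mul,
    es, em]
  have hms : 0 < m / s := by positivity
  calc _ = 3 * (∫ x : E3, dom ‖x‖) * (m / s) := by field_simp; ring
    _ ≤ _ := by nlinarith

end
end

section
/- Let R > 0 and let G : ℝ → ℝ be continuous with support contained in [0, R], and define v(r,t) = (1/r) ∫_{t−r}^{t+r} G(s) ds for r > 0. Then for every r ∈ (0, R): v(r,0) = (1/r) ∫_0^r G(s) ds, ∂_r v(r,0) = G(r)/r − (1/r²) ∫_0^r G(s) ds, and ∂_t v(r,0) = G(r)/r. Moreover ∫_0^R |∂_t v(r,0)|² r² dr = ∫_0^R |G(s)|² ds, and ∫_0^R ∂_t v(r,0) ( r ∂_r v(r,0) + (1/2) v(r,0) ) r² dr = ∫_0^R s |G(s)|² ds − (1/4) ( ∫_0^R G(s) ds )². -/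
open MeasureTheory

noncomputable section

theorem stmt16 (R : ℝ) (hR : 0 < R) (G : ℝ → ℝ) (hGc : Continuous G)
    (hGs : Function.support G ⊆ Set.Icc 0 R) :
    (∀ r ∈ Set.Ioo (0:ℝ) R,
      freeWave G r 0 = (1 / r) * ∫ s in (0:ℝ)..r, G s ∧
      deriv (fun ρ => freeWave G ρ 0) r
        = G r / r - (1 / r ^ 2) * ∫ s in (0:ℝ)..r, G s ∧
      deriv (fun τ => freeWave G r τ) 0 = G r / r) ∧
    (∫ r in (0:ℝ)..R, (deriv (fun τ => freeWave G r τ) 0) ^ 2 * r ^ 2)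
      = (∫ s in (0:ℝ)..R, (G s) ^ 2) ∧
    (∫ r in (0:ℝ)..R, deriv (fun τ => freeWave G r τ) 0 *
        (r * deriv (fun ρ => freeWave G ρ 0) r + (1/2) * freeWave G r 0) * r ^ 2)
      = (∫ s in (0:ℝ)..R, s * (G s) ^ 2) - (1/4) * (∫ s in (0:ℝ)..R, G s) ^ 2 := by
  have hneg : ∀ s : ℝ, s < 0 → G s = 0 := by
    intro s hs
    by_contra h
    exact absurd (hGs h).1 (not_le.mpr hs)
  obtain ⟨F, hF⟩ : ∃ F : ℝ → ℝ, F = fun x => ∫ s in (0:ℝ)..x, G s := ⟨_, rfl⟩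
  have hFd : ∀ x, HasDerivAt F (G x) x := by
    intro x
    rw [hF]
    exact intervalIntegral.integral_hasDerivAt_right (hGc.intervalIntegrable _ _)
      hGc.aestronglyMeasurable.stronglyMeasurableAtFilter hGc.continuousAt
  have hFint : ∀ x, ∫ s in (0:ℝ)..x, G s = F x := by intro x; rw [hF]
  have hab : ∀ a b : ℝ, ∫ s in a..b, G s = F b - F a := by
    intro a b
    exact intervalIntegral.integral_eq_sub_of_hasDerivAt (fun x _ => hFd x)
      (hGc.intervalIntegrable _ _)
  have hFneg : ∀ r : ℝ, 0 < r → F (-r) = 0 := by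
    intro r hr
    rw [← hFint, intervalIntegral.integral_symm, neg_eq_zero]
    apply intervalIntegral.integral_zero_ae
    have h0 : ∀ᵐ x : ℝ, x ≠ 0 := by simp [ae_iff]
    filter_upwards [h0] with x hx hx2
    rw [Set.uIoc_of_le (by linarith)] at hx2
    exact hneg x (lt_of_le_of_ne hx2.2 hx)
  have hw : ∀ r t : ℝ, freeWave G r t = (1 / r) * (F (t + r) - F (t - r)) := by
    intro r t
    rw [freeWave, hab]
  have h1 : ∀ r : ℝ, 0 < r → freeWave G r 0 = (1 / r) * F r := by
    intro r hr
    rw [hw, zero_add, zero_sub, hFneg r hr, sub_zero]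
  have h2 : ∀ r : ℝ, 0 < r → deriv (fun ρ => freeWave G ρ 0) r
      = G r / r - (1 / r ^ 2) * F r := by
    intro r hr
    have he : (fun ρ => freeWave G ρ 0) =ᶠ[nhds r] fun ρ => F ρ / ρ := by
      filter_upwards [lt_mem_nhds hr] with ρ hρ
      rw [h1 ρ hρ]; ring
    rw [he.deriv_eq]
    refine ((hFd r).div (hasDerivAt_id r) hr.ne').deriv.trans ?_
    simp only [id]
    field_simp
  have h3 : ∀ r : ℝ, 0 < r → deriv (fun τ => freeWave G r τ) 0 = G r / r := by
    intro r hr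
    have e : (fun τ => freeWave G r τ) = fun τ => (1 / r) * (F (τ + r) - F (τ - r)) := by
      funext τ; exact hw r τ
    have a := (hFd (0 + r)).comp_add_const 0 r
    have b := (hFd (0 - r)).comp_sub_const 0 r
    rw [e]
    refine ((a.sub b).const_mul (1 / r)).deriv.trans ?_
    rw [zero_add, zero_sub, hneg (-r) (by linarith)]
    ring
  refine ⟨?_, ?_, ?_⟩
  · intro r hr
    rw [hFint]
    exact ⟨h1 r hr.1, h2 r hr.1, h3 r hr.1⟩
  · apply intervalIntegral.integral_congr_ae
    filter_upwards with r hr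
    rw [Set.uIoc_of_le hR.le] at hr
    have := hr.1
    rw [h3 r hr.1]
    field_simp
  · have hFc : Continuous F := continuous_iff_continuousAt.mpr fun x => (hFd x).continuousAt
    have hGF : ∫ r in (0:ℝ)..R, (1/2) * (F r * G r) = (1/4) * F R ^ 2 := by
      have hd : ∀ x ∈ Set.uIcc 0 R,
          HasDerivAt (fun x => (1/4) * F x ^ 2) ((1/2) * (F x * G x)) x := by
        intro x _
        refine (((hFd x).pow 2).const_mul (1/4 : ℝ)).congr_deriv ?_
        push_cast
        ring
      rw [intervalIntegral.integral_eq_sub_of_hasDerivAt hd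
        ((by fun_prop : Continuous fun x => (1/2) * (F x * G x)).intervalIntegrable _ _)]
      have : F 0 = 0 := by rw [← hFint]; simp
      rw [this]; ring
    rw [hFint, ← hGF, ← intervalIntegral.integral_sub
      ((by fun_prop : Continuous fun s => s * (G s) ^ 2).intervalIntegrable _ _)
      ((by fun_prop : Continuous fun x => (1/2) * (F x * G x)).intervalIntegrable _ _)]
    apply intervalIntegral.integral_congr_ae
    filter_upwards with r hr
    rw [Set.uIoc_of_le hR.le] at hr
    have := hr.1
    rw [h3 r hr.1, h2 r hr.1, h1 r hr.1]
    field_simp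
    ring

end
end

section
/- Let c > 0 and ε > 0. Let (φ_m)_{m≥0} be a sequence of positive real numbers and (k_m)_{m≥0} a sequence of nonnegative integers such that for every m ≥ 0: φ_{m+1} ≤ φ_m − c² 4^{k_m} φ_m² and 2^{k_m} ≤ c^{−1} φ_m^{−1/2}. Then φ_m → 0 as m → ∞ and the series ∑_{m=0}^{∞} 2^{k_m} φ_m^{1+ε} converges. -/
noncomputable section

theorem aux_tele (f g : ℕ → ℝ) (hf : ∀ m, 0 ≤ f m) (hg : ∀ m, 0 ≤ g m)
    (h : ∀ m, f m ≤ g m - g (m + 1)) : Summable f := by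
  refine summable_of_sum_range_le (c := g 0) hf (fun n => ?_)
  calc ∑ i ∈ Finset.range n, f i ≤ ∑ i ∈ Finset.range n, (g i - g (i + 1)) :=
        Finset.sum_le_sum (fun i _ => h i)
    _ = g 0 - g n := Finset.sum_range_sub' g n
    _ ≤ g 0 := by linarith [hg n]

theorem aux_conc (a b e : ℝ) (ha : 0 < a) (hb : 0 < b) (he : 0 < e) (he1 : e ≤ 1) :
    e * ((a - b) * a ^ (e - 1)) ≤ a ^ e - b ^ e := by
  have h := rpow_one_add_le_one_add_mul_self (s := b / a - 1) (p := e)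
    (by have : 0 < b / a := by positivity
        linarith) he.le he1
  rw [show 1 + (b / a - 1) = b / a by ring, Real.div_rpow hb.le ha.le] at h
  have hae : 0 < a ^ e := Real.rpow_pos_of_pos ha e
  rw [div_le_iff₀ hae] at h
  rw [Real.rpow_sub_one ha.ne']
  have : e * ((a - b) * (a ^ e / a)) = - (e * (b / a - 1)) * a ^ e := by
    field_simp
    ring
  rw [this]
  linarith

theorem stmt17 (c ε : ℝ) (hc : 0 < c) (hε : 0 < ε)
    (φ : ℕ → ℝ) (k : ℕ → ℕ)
    (hφ : ∀ m, 0 < φ m)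
    (h1 : ∀ m, φ (m + 1) ≤ φ m - c ^ 2 * 4 ^ (k m) * (φ m) ^ 2)
    (h2 : ∀ m, (2:ℝ) ^ (k m) ≤ c⁻¹ * (φ m) ^ (-(1/2) : ℝ)) :
    Filter.Tendsto φ Filter.atTop (nhds 0) ∧
      Summable (fun m => (2:ℝ) ^ (k m) * (φ m) ^ ((1:ℝ) + ε)) := by
  have hanti : Antitone φ := antitone_nat_of_succ_le (fun m => by
    have : 0 ≤ c ^ 2 * 4 ^ (k m) * (φ m) ^ 2 := by positivity
    linarith [h1 m])
  -- the dissipated quantity controls the summand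
  have hkey : ∀ m, c ^ 2 * (2 ^ (k m) * φ m ^ 2) ≤ φ m - φ (m + 1) := fun m => by
    have h24 : (2:ℝ) ^ (k m) ≤ 4 ^ (k m) := pow_le_pow_left₀ (by norm_num) (by norm_num) _
    have : c ^ 2 * (2 ^ (k m) * φ m ^ 2) ≤ c ^ 2 * (4 ^ (k m) * φ m ^ 2) := by gcongr
    linarith [h1 m]
  constructor
  · have hs : Summable (fun m => c ^ 2 * φ m ^ 2) := by
      refine aux_tele _ φ (fun m => by positivity) (fun m => (hφ m).le) (fun m => ?_)
      refine le_trans ?_ (hkey m)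
      have h1k : (1:ℝ) ≤ 2 ^ (k m) := one_le_pow₀ (by norm_num)
      have : φ m ^ 2 ≤ 2 ^ (k m) * φ m ^ 2 := le_mul_of_one_le_left (by positivity) h1k
      gcongr
    have ht := hs.tendsto_atTop_zero.sqrt
    have ht2 := ht.const_mul c⁻¹
    simp only [Real.sqrt_zero, mul_zero] at ht2
    refine ht2.congr (fun m => ?_)
    rw [← mul_pow, Real.sqrt_sq (mul_pos hc (hφ m)).le]
    field_simp
  · set e := min ε 1 with he
    have he0 : 0 < e := lt_min hε one_pos
    have he1 : e ≤ 1 := min_le_right _ _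
    have heε : e ≤ ε := min_le_left _ _
    have hs : Summable (fun m => (e * c ^ 2) * ((2:ℝ) ^ (k m) * φ m ^ (1 + e))) := by
      refine aux_tele _ (fun m => φ m ^ e) (fun m => ?_) (fun m => ?_) (fun m => ?_)
      · have := hφ m
        positivity
      · exact (Real.rpow_pos_of_pos (hφ m) e).le
      · refine le_trans ?_ (aux_conc (φ m) (φ (m + 1)) e (hφ m) (hφ _) he0 he1)
        have hp : φ m ^ (1 + e) = φ m ^ 2 * φ m ^ (e - 1) := by
          rw [← Real.rpow_natCast (φ m) 2, ← Real.rpow_add (hφ m)]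
          congr 1
          push_cast
          ring
        have h0 : 0 < φ m ^ (e - 1) := Real.rpow_pos_of_pos (hφ m) _
        have := mul_le_mul_of_nonneg_left
          (mul_le_mul_of_nonneg_right (hkey m) h0.le) he0.le
        rw [hp]
        linarith
    have hs2 : Summable (fun m => (2:ℝ) ^ (k m) * φ m ^ (1 + e)) :=
      (summable_mul_left_iff (by positivity)).1 hs
    refine Summable.of_nonneg_of_le (fun m => ?_) (fun m => ?_)
      (hs2.mul_left (φ 0 ^ (ε - e)))
    · have := hφ m
      positivity
    · have hp : φ m ^ (1 + ε) = φ m ^ (ε - e) * φ m ^ (1 + e) := by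
        rw [← Real.rpow_add (hφ m)]
        congr 1
        ring
      have h3 : φ m ^ (ε - e) ≤ φ 0 ^ (ε - e) :=
        Real.rpow_le_rpow (hφ m).le (hanti (Nat.zero_le m)) (by linarith)
      have h4 : 0 < φ m ^ (1 + e) := Real.rpow_pos_of_pos (hφ m) _
      have h5 : 0 ≤ (2:ℝ) ^ (k m) * φ m ^ (1 + e) := by positivity
      have := mul_le_mul_of_nonneg_right h3 h5
      rw [hp]
      linarith

end
end
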